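/- For every x > 0, the derivative of g_pro satisfies −1 ≤ g_pro'(x) ≤ 0. -/

import Mathlib

/-!
Write `N`, `Φ`, `g` for `stdN`, `PhiPro`, `gPro`. Since `N' = -x N` and `Φ' = N`,
`g' = -N (x Φ + N) / Φ²`, which is nonpositive for `x > 0`. The bound `-1 ≤ g'` amounts to
`x N Φ + N² ≤ Φ²`. As `N` is decreasing on `[0, x]` and `Φ 0 = 1/2`, we have `Φ ≥ 1/2 + x N`
(`half_add_le_PhiPro`), so `Φ² ≥ x N Φ + Φ/2 ≥ x N Φ + 1/4`, and `N² ≤ 1/(2π) ≤ 1/4`.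
-/

/-- The standard normal probability density function. -/
noncomputable def stdN (x : ℝ) : ℝ := (Real.sqrt (2 * Real.pi))⁻¹ * Real.exp (-x ^ 2 / 2)

/-- The standard normal cumulative distribution function (inverse probit link). -/
noncomputable def PhiPro (x : ℝ) : ℝ := ∫ t in Set.Iic x, stdN t

/-- The Mills-type ratio `g_pro(x) = 𝒩(x) / Φ_pro(x)`. -/
noncomputable def gPro (x : ℝ) : ℝ := stdN x / PhiPro x

open MeasureTheory

lemma stdN_pos (x : ℝ) : 0 < stdN x := by
  unfold stdN; positivity

lemma continuous_stdN : Continuous stdN := by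
  unfold stdN; fun_prop

lemma stdN_eq (x : ℝ) :
    stdN x = (Real.sqrt (2 * Real.pi))⁻¹ * Real.exp (-(1 / 2) * x ^ 2) := by
  unfold stdN; congr 2; ring

lemma integrable_stdN : Integrable stdN := by
  rw [funext stdN_eq]
  exact (integrable_exp_neg_mul_sq (by norm_num)).const_mul _

lemma hasDerivAt_stdN (x : ℝ) : HasDerivAt stdN (-x * stdN x) x := by
  have h : HasDerivAt (fun y : ℝ => -y ^ 2 / 2) (-x) x :=
    ((hasDerivAt_pow 2 x).neg.div_const 2).congr_deriv (by norm_num; ring)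
  exact (h.exp.const_mul (Real.sqrt (2 * Real.pi))⁻¹).congr_deriv (by unfold stdN; ring)

lemma PhiPro_zero : PhiPro 0 = 1 / 2 := by
  have h : PhiPro 0 = ∫ t in Set.Ioi (0 : ℝ), stdN t := by
    have := integral_comp_neg_Iic (0 : ℝ) stdN
    rw [neg_zero] at this
    rw [← this, PhiPro]
    congr 1
    ext t
    simp [stdN]
  rw [h, funext stdN_eq, integral_const_mul, integral_gaussian_Ioi]
  rw [show Real.pi / (1 / 2) = 2 * Real.pi by ring]
  have : Real.sqrt (2 * Real.pi) ≠ 0 := by positivity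
  field_simp

lemma PhiPro_eq (x : ℝ) : PhiPro x = 1 / 2 + ∫ t in (0 : ℝ)..x, stdN t := by
  have := intervalIntegral.integral_Iic_sub_Iic (a := 0) (b := x) (μ := volume)
    integrable_stdN.integrableOn integrable_stdN.integrableOn
  rw [← this, ← PhiPro_zero, PhiPro, PhiPro]; ring

lemma hasDerivAt_PhiPro (x : ℝ) : HasDerivAt PhiPro (stdN x) x := by
  rw [funext PhiPro_eq]
  exact (continuous_stdN.integral_hasStrictDerivAt 0 x).hasDerivAt.const_add _

lemma half_add_le_PhiPro {x : ℝ} (hx : 0 < x) : 1 / 2 + x * stdN x ≤ PhiPro x := by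
  rw [PhiPro_eq]
  have h : ∫ _ in (0 : ℝ)..x, stdN x ≤ ∫ t in (0 : ℝ)..x, stdN t := by
    refine intervalIntegral.integral_mono_on hx.le (by simp)
      (continuous_stdN.intervalIntegrable _ _) fun t ht => ?_
    have := pow_le_pow_left₀ ht.1 ht.2 2
    unfold stdN
    gcongr
  simp only [intervalIntegral.integral_const, smul_eq_mul, sub_zero] at h
  linarith

lemma stdN_sq_le (x : ℝ) : stdN x ^ 2 ≤ 1 / 4 := by
  have h1 : Real.exp (-x ^ 2 / 2) ≤ 1 := Real.exp_le_one_iff.2 (by nlinarith [sq_nonneg x])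
  have h2 : (2 : ℝ) ≤ Real.sqrt (2 * Real.pi) :=
    Real.le_sqrt_of_sq_le (by linarith [Real.pi_gt_three])
  have h3 : stdN x ≤ 2⁻¹ * 1 := by unfold stdN; gcongr
  nlinarith [stdN_pos x]

/-- For every `x > 0`, the derivative of `g_pro` satisfies `-1 ≤ g_pro'(x) ≤ 0`. -/
theorem stmt5 (x : ℝ) (hx : 0 < x) :
    -1 ≤ deriv gPro x ∧ deriv gPro x ≤ 0 := by
  have hN := stdN_pos x
  have hxN := mul_pos hx hN
  have hP := half_add_le_PhiPro hx
  have hP0 : 0 < PhiPro x := by linarith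
  have hsq := stdN_sq_le x
  have hd : deriv gPro x = (-x * stdN x * PhiPro x - stdN x * stdN x) / PhiPro x ^ 2 :=
    ((hasDerivAt_stdN x).div (hasDerivAt_PhiPro x) hP0.ne').deriv
  rw [hd]
  constructor
  · rw [le_div_iff₀ (by positivity)]
    nlinarith [mul_le_mul_of_nonneg_right hP hP0.le]
  · apply div_nonpos_of_nonpos_of_nonneg _ (by positivity)
    nlinarith [mul_pos hxN hP0]
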